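/- For any job j ∈ J⁻ with density class δ = ⌊ρ_j⌋₂, define the index set I_j := {θ ∈ ℤ : θ < δ and P^θ(r_j) ≥ (1.5)^{δ−θ}·p_j/(8ε)}. Then α_j⁻ ≤ 4·p_j·∑_{θ∈I_j} W^θ. -/

import Mathlib

/-!
Write `S` for the remaining weight, at time `r_j`, of the active jobs of class below
`δ = ⌊ρ_j⌋₂`, so that `α_j⁻ = p_j · S`. A class-`θ` job has density below `2^(θ+1)`, hence
`W^θ(r_j) ≤ 2^(θ+1) · P^θ(r_j)` (`AlgA.Wd_le_Pd`). For `θ < δ` outside `I_j` this gives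
`W^θ(r_j) ≤ c · (3/4)^(δ-θ)` with `c = 2^δ · p_j / (4ε)`, and summing the geometric series
(`sum_geom_le`) these classes contribute at most `3c` in total. Since `2^δ · p_j ≤ w_j`, and
`j ∈ J⁻` means `w_j / ε < S`, it follows that `3c ≤ (3/4) · S`. So the classes in `I_j` carry at
least `S / 4`, and each of them carries at most `W^θ` (`AlgA.Wd_le_Wmax`).
-/


open Finset
open scoped Classical

noncomputable section

namespace NPSched

/-- The density `ρ_j = w_j / p_j` of job `j`. -/
def den (p : ℕ → ℕ) (w : ℕ → ℝ) (j : ℕ) : ℝ := w j / p j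

/-- The density class `⌊ρ_j⌋₂` of job `j`: the largest integer `i` with `2 ^ i ≤ ρ_j`. -/
def cls (p : ℕ → ℕ) (w : ℕ → ℝ) (j : ℕ) : ℤ := Int.log 2 (den p w j)

/-- Remaining size `p_j(t)` of job `j` at integer time `t` under schedule `sched`,
where `sched t` is the job (if any) processed during the slot `[t, t+1]`. -/
def rem (p : ℕ → ℕ) (sched : ℕ → Option ℕ) (j t : ℕ) : ℕ :=
  p j - ((Finset.range t).filter fun t' => sched t' = some j).card

/-- Remaining weight `w_j(t) = ρ_j · p_j(t)`. -/
def wrem (p : ℕ → ℕ) (w : ℕ → ℝ) (sched : ℕ → Option ℕ) (j t : ℕ) : ℝ :=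
  den p w j * rem p sched j t

/-- Fractional weighted flow time `∑_{t ≥ r_j} w_j(t)` of job `j`. -/
def fracFlow (r p : ℕ → ℕ) (w : ℕ → ℝ) (sched : ℕ → Option ℕ) (j : ℕ) : ℝ :=
  ∑' t : ℕ, if r j ≤ t then wrem p w sched j t else 0

/-- `s` is the first time at which job `j` is ever processed. -/
def isStart (sched : ℕ → Option ℕ) (j s : ℕ) : Prop :=
  sched s = some j ∧ ∀ s' < s, sched s' ≠ some j

/-- Active jobs `A(t)`: released by `t`, not immediately rejected, not yet finished. -/
def activeAt (J : Finset ℕ) (r p : ℕ → ℕ) (sched : ℕ → Option ℕ) (Jimm : Finset ℕ)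
    (t : ℕ) : Finset ℕ :=
  J.filter fun j => r j ≤ t ∧ j ∉ Jimm ∧ 0 < rem p sched j t

/-- The set `A(r_j)` of active jobs present when `j` arrives: jobs released strictly
earlier, or simultaneously but earlier in the fixed (index) order, that are neither
rejected nor finished.  (`j` itself is excluded.) -/
def arrSet (J : Finset ℕ) (r p : ℕ → ℕ) (sched : ℕ → Option ℕ) (Jimm : Finset ℕ)
    (j : ℕ) : Finset ℕ :=
  J.filter fun j' =>
    (r j' < r j ∨ (r j' = r j ∧ j' < j)) ∧ j' ∉ Jimm ∧ 0 < rem p sched j' (r j)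

/-- `α_j`: the increase of total fractional weighted flow time caused by the arrival
of `j`, had HDF been run on `A(r_j) ∪ {j}` from time `r_j` on. -/
def alpha (J : Finset ℕ) (r p : ℕ → ℕ) (w : ℕ → ℝ) (sched : ℕ → Option ℕ)
    (Jimm : Finset ℕ) (j : ℕ) : ℝ :=
  w j * ∑ j' ∈ (arrSet J r p sched Jimm j).filter (fun j' => den p w j ≤ den p w j'),
      (rem p sched j' (r j) : ℝ)
    + w j * p j / 2
    + p j * ∑ j' ∈ (arrSet J r p sched Jimm j).filter (fun j' => den p w j' < den p w j),
        wrem p w sched j' (r j)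

/-- `α_j⁺`: the part of (the two sums of) `α_j` coming from jobs of density class
at least `⌊ρ_j⌋₂`. -/
def alphaPlus (J : Finset ℕ) (r p : ℕ → ℕ) (w : ℕ → ℝ) (sched : ℕ → Option ℕ)
    (Jimm : Finset ℕ) (j : ℕ) : ℝ :=
  w j * ∑ j' ∈ (arrSet J r p sched Jimm j).filter
      (fun j' => cls p w j ≤ cls p w j' ∧ den p w j ≤ den p w j'),
      (rem p sched j' (r j) : ℝ)
    + p j * ∑ j' ∈ (arrSet J r p sched Jimm j).filter
        (fun j' => cls p w j ≤ cls p w j' ∧ den p w j' < den p w j),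
        wrem p w sched j' (r j)

/-- `α_j⁻`: the contribution to `α_j` of jobs of density class strictly less
than `⌊ρ_j⌋₂`. -/
def alphaMinus (J : Finset ℕ) (r p : ℕ → ℕ) (w : ℕ → ℝ) (sched : ℕ → Option ℕ)
    (Jimm : Finset ℕ) (j : ℕ) : ℝ :=
  p j * ∑ j' ∈ (arrSet J r p sched Jimm j).filter (fun j' => cls p w j' < cls p w j),
      wrem p w sched j' (r j)

/-- The set `J⁺` of jobs assigned to table `T⁺`. -/
def Jplus (J : Finset ℕ) (r p : ℕ → ℕ) (w : ℕ → ℝ) (sched : ℕ → Option ℕ)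
    (Jimm : Finset ℕ) (ε : ℝ) : Finset ℕ :=
  J.filter fun j => w j * p j / ε ≤ alphaPlus J r p w sched Jimm j

/-- The set `J⁻` of jobs assigned to table `T⁻`. -/
def Jminus (J : Finset ℕ) (r p : ℕ → ℕ) (w : ℕ → ℝ) (sched : ℕ → Option ℕ)
    (Jimm : Finset ℕ) (ε : ℝ) : Finset ℕ :=
  J.filter fun j => w j * p j / ε < alphaMinus J r p w sched Jimm j

/-- The bucket `(⌊α_j⁺/w_j⌋₂, ⌊w_j⌋₂)` of table `T⁺` to which a job of `J⁺` is assigned. -/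
def bucketPlus (J : Finset ℕ) (r p : ℕ → ℕ) (w : ℕ → ℝ) (sched : ℕ → Option ℕ)
    (Jimm : Finset ℕ) (j : ℕ) : ℤ × ℤ :=
  (Int.log 2 (alphaPlus J r p w sched Jimm j / w j), Int.log 2 (w j))

/-- The bucket `(⌊α_j⁻⌋₂, ⌊ρ_j⌋₂, ⌊p_j⌋₂)` of table `T⁻` to which a job of `J⁻` is assigned. -/
def bucketMinus (J : Finset ℕ) (r p : ℕ → ℕ) (w : ℕ → ℝ) (sched : ℕ → Option ℕ)
    (Jimm : Finset ℕ) (j : ℕ) : ℤ × ℤ × ℤ :=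
  (Int.log 2 (alphaMinus J r p w sched Jimm j), cls p w j, Int.log 2 ((p j : ℝ)))

/-- `j'` arrives no later than `j` (simultaneous arrivals ordered by index). -/
def arrLE (r : ℕ → ℕ) (j' j : ℕ) : Prop :=
  r j' < r j ∨ (r j' = r j ∧ j' ≤ j)

/-- The (1-based) position of `j` in the arrival order of its bucket of `T⁺`. -/
def rankPlus (J : Finset ℕ) (r p : ℕ → ℕ) (w : ℕ → ℝ) (sched : ℕ → Option ℕ)
    (Jimm : Finset ℕ) (ε : ℝ) (j : ℕ) : ℕ :=
  ((Jplus J r p w sched Jimm ε).filter fun j' =>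
    bucketPlus J r p w sched Jimm j' = bucketPlus J r p w sched Jimm j ∧ arrLE r j' j).card

/-- The (1-based) position of `j` in the arrival order of its bucket of `T⁻`. -/
def rankMinus (J : Finset ℕ) (r p : ℕ → ℕ) (w : ℕ → ℝ) (sched : ℕ → Option ℕ)
    (Jimm : Finset ℕ) (ε : ℝ) (j : ℕ) : ℕ :=
  ((Jminus J r p w sched Jimm ε).filter fun j' =>
    bucketMinus J r p w sched Jimm j' = bucketMinus J r p w sched Jimm j ∧ arrLE r j' j).card

/-- An execution of algorithm `A` on a job instance `(J, r, p, w)` with parameter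
`ε` (where `k = 1/ε` is a positive integer): the data consists of the schedule
(`sched t` is the job processed in slot `[t, t+1]`), the set `Jimm` of immediately
rejected jobs, and the growing set `L t` of preemptible jobs; the fields below
axiomatise exactly the rules of algorithm `A`. -/
structure AlgA where
  /-- the (finite) set of jobs -/
  J : Finset ℕ
  /-- release times -/
  r : ℕ → ℕ
  /-- sizes -/
  p : ℕ → ℕ
  /-- weights -/
  w : ℕ → ℝ
  /-- the parameter ε -/
  ε : ℝ
  /-- `k = 1/ε`, a positive integer -/
  k : ℕ
  /-- the schedule produced by algorithm `A` -/
  sched : ℕ → Option ℕ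
  /-- the set `J^imm` of immediately rejected jobs -/
  Jimm : Finset ℕ
  /-- `L t` : the set of preemptible jobs at time `t` -/
  L : ℕ → Finset ℕ
  hp : ∀ j ∈ J, 0 < p j
  hw : ∀ j ∈ J, 0 < w j
  hε : 0 < ε
  hε2 : ε ^ 2 ≤ 1 / 2
  hk : (k : ℝ) = 1 / ε
  /-- immediate rejections: in each bucket of `T⁺` the first job and every
  `(1/ε)`-th job thereafter (positions `1, 1 + k, 1 + 2k, …`), and in each bucket
  of `T⁻` every `(1/ε)`-th job (positions `k, 2k, …`), are rejected on arrival. -/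
  hJimm : ∀ j, j ∈ Jimm ↔ j ∈ J ∧
    ((j ∈ Jplus J r p w sched Jimm ε ∧ rankPlus J r p w sched Jimm ε j % k = 1 % k) ∨
     (j ∈ Jminus J r p w sched Jimm ε ∧ rankMinus J r p w sched Jimm ε j % k = 0))
  hL0 : L 0 = ∅
  /-- a job enters `L` when the weight released since it started processing
  exceeds `w_j / ε`; once in `L` it stays in `L`. -/
  hLsucc : ∀ t j, j ∈ L (t + 1) ↔ j ∈ L t ∨
    (sched t = some j ∧ ∃ s, isStart sched j s ∧
      w j / ε < ∑ j' ∈ J.filter (fun j' => s < r j' ∧ r j' ≤ t + 1), w j')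
  /-- only active jobs are processed -/
  hvalid : ∀ t j, sched t = some j → j ∈ activeAt J r p sched Jimm t
  /-- a running job that is unfinished and not preemptible keeps running -/
  hcont : ∀ t j, sched t = some j → 0 < rem p sched j (t + 1) → j ∉ L (t + 1) →
    sched (t + 1) = some j
  /-- initially, a highest-density active job is processed (if any job is active) -/
  hHDF0 : (activeAt J r p sched Jimm 0 = ∅ ∧ sched 0 = none) ∨
    ∃ j, sched 0 = some j ∧ ∀ j' ∈ activeAt J r p sched Jimm 0, den p w j' ≤ den p w j
  /-- whenever the previous job has finished or become preemptible (or no job was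
  running), a highest-density active job is processed (if any job is active) -/
  hHDFsucc : ∀ t, (∀ j, sched t = some j → rem p sched j (t + 1) = 0 ∨ j ∈ L (t + 1)) →
    (activeAt J r p sched Jimm (t + 1) = ∅ ∧ sched (t + 1) = none) ∨
    ∃ j, sched (t + 1) = some j ∧
      ∀ j' ∈ activeAt J r p sched Jimm (t + 1), den p w j' ≤ den p w j
  /-- every job that is not immediately rejected is eventually finished by `A` -/
  hdone : ∀ j ∈ J, j ∉ Jimm → ∃ T, rem p sched j T = 0



/-- `A^δ(t)`: the active jobs of density class `δ` at time `t`. -/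
def Ad (J : Finset ℕ) (r p : ℕ → ℕ) (w : ℕ → ℝ) (sched : ℕ → Option ℕ)
    (Jimm : Finset ℕ) (δ : ℤ) (t : ℕ) : Finset ℕ :=
  (activeAt J r p sched Jimm t).filter fun j => cls p w j = δ

/-- `P^δ(t)`: the total remaining size of the active class-`δ` jobs at time `t`. -/
def Pd (J : Finset ℕ) (r p : ℕ → ℕ) (w : ℕ → ℝ) (sched : ℕ → Option ℕ)
    (Jimm : Finset ℕ) (δ : ℤ) (t : ℕ) : ℝ :=
  ∑ j ∈ Ad J r p w sched Jimm δ t, (rem p sched j t : ℝ)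

/-- `W^δ(t)`: the total remaining weight of the active class-`δ` jobs at time `t`. -/
def Wd (J : Finset ℕ) (r p : ℕ → ℕ) (w : ℕ → ℝ) (sched : ℕ → Option ℕ)
    (Jimm : Finset ℕ) (δ : ℤ) (t : ℕ) : ℝ :=
  ∑ j ∈ Ad J r p w sched Jimm δ t, wrem p w sched j t

/-- `P^δ = max_t P^δ(t)`. -/
def Pmax (J : Finset ℕ) (r p : ℕ → ℕ) (w : ℕ → ℝ) (sched : ℕ → Option ℕ)
    (Jimm : Finset ℕ) (δ : ℤ) : ℝ :=
  ⨆ t : ℕ, Pd J r p w sched Jimm δ t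

/-- `W^δ = max_t W^δ(t)`. -/
def Wmax (J : Finset ℕ) (r p : ℕ → ℕ) (w : ℕ → ℝ) (sched : ℕ → Option ℕ)
    (Jimm : Finset ℕ) (δ : ℤ) : ℝ :=
  ⨆ t : ℕ, Wd J r p w sched Jimm δ t

/-! ### Sums over density classes -/

/-- The geometric series `∑_{d ≥ 1} (3/4)^d = 3` bounds the sum over any finite set of
classes below `δ`. -/
lemma sum_geom_le (K : Finset ℤ) (δ : ℤ) (hK : ∀ θ ∈ K, θ < δ) :
    ∑ θ ∈ K, (3 / 4 : ℝ) ^ (δ - θ) ≤ 3 := by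
  have hinj : Set.InjOn (fun θ : ℤ => (δ - θ - 1).toNat) K := by
    intro a ha b hb hab
    have h1 := hK a ha
    have h2 := hK b hb
    simp only at hab
    omega
  have hterm : ∀ θ ∈ K, (3 / 4 : ℝ) ^ (δ - θ) = 3 / 4 * (3 / 4 : ℝ) ^ (δ - θ - 1).toNat := by
    intro θ hθ
    have h1 := hK θ hθ
    have h2 : δ - θ = (((δ - θ - 1).toNat + 1 : ℕ) : ℤ) := by omega
    conv_lhs => rw [h2]
    rw [zpow_natCast, pow_succ]
    ring
  rw [Finset.sum_congr rfl hterm, ← Finset.mul_sum,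
    ← Finset.sum_image (f := fun n : ℕ => (3 / 4 : ℝ) ^ n) hinj]
  have hs : Summable fun n : ℕ => (3 / 4 : ℝ) ^ n :=
    summable_geometric_of_lt_one (by norm_num) (by norm_num)
  have hle := hs.sum_le_tsum (K.image fun θ : ℤ => (δ - θ - 1).toNat)
    (fun n _ => by positivity)
  rw [tsum_geometric_of_lt_one (by norm_num) (by norm_num)] at hle
  norm_num at hle ⊢
  linarith

lemma mem_J_of_mem_Ad {J : Finset ℕ} {r p : ℕ → ℕ} {w : ℕ → ℝ} {sched : ℕ → Option ℕ}
    {Jimm : Finset ℕ} {θ : ℤ} {t i : ℕ} (hi : i ∈ Ad J r p w sched Jimm θ t) : i ∈ J :=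
  (Finset.mem_filter.mp (Finset.mem_filter.mp hi).1).1

lemma AlgA.den_pos (A : AlgA) {i : ℕ} (hi : i ∈ A.J) : 0 < den A.p A.w i :=
  div_pos (A.hw i hi) (Nat.cast_pos.mpr (A.hp i hi))

lemma AlgA.wrem_nonneg (A : AlgA) {i : ℕ} (hi : i ∈ A.J) (t : ℕ) :
    0 ≤ wrem A.p A.w A.sched i t :=
  mul_nonneg (A.den_pos hi).le (Nat.cast_nonneg _)

lemma AlgA.Wd_nonneg (A : AlgA) (θ : ℤ) (t : ℕ) :
    0 ≤ Wd A.J A.r A.p A.w A.sched A.Jimm θ t :=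
  Finset.sum_nonneg fun _ hi => A.wrem_nonneg (mem_J_of_mem_Ad hi) t

/-- The supremum defining `W^θ` is over a bounded family: the total initial weight of all
jobs is an upper bound. -/
lemma AlgA.Wd_le_Wmax (A : AlgA) (θ : ℤ) (t : ℕ) :
    Wd A.J A.r A.p A.w A.sched A.Jimm θ t ≤ Wmax A.J A.r A.p A.w A.sched A.Jimm θ := by
  refine le_ciSup (f := fun t => Wd A.J A.r A.p A.w A.sched A.Jimm θ t)
    ⟨∑ i ∈ A.J, den A.p A.w i * A.p i, ?_⟩ t
  rintro _ ⟨s, rfl⟩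
  refine (Finset.sum_le_sum fun i hi => ?_).trans
    (Finset.sum_le_sum_of_subset_of_nonneg (fun i hi => mem_J_of_mem_Ad hi)
      fun i hi _ => mul_nonneg (A.den_pos hi).le (Nat.cast_nonneg _))
  refine mul_le_mul_of_nonneg_left ?_ (A.den_pos (mem_J_of_mem_Ad hi)).le
  exact_mod_cast Nat.sub_le _ _

/-- A job of class `θ` has density below `2^(θ+1)`. -/
lemma AlgA.Wd_le_Pd (A : AlgA) (θ : ℤ) (t : ℕ) :
    Wd A.J A.r A.p A.w A.sched A.Jimm θ t ≤
      2 ^ (θ + 1) * Pd A.J A.r A.p A.w A.sched A.Jimm θ t := by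
  unfold Wd Pd
  rw [Finset.mul_sum]
  refine Finset.sum_le_sum fun i hi => ?_
  refine mul_le_mul_of_nonneg_right ?_ (Nat.cast_nonneg _)
  have h := Int.lt_zpow_succ_log_self (b := 2) (by norm_num) (den A.p A.w i)
  have hc : Int.log 2 (den A.p A.w i) = θ := (Finset.mem_filter.mp hi).2
  rw [hc] at h
  exact_mod_cast h.le

/-- Splitting the sum in `α_j⁻` by density class. -/
lemma AlgA.arr_sum_le (A : AlgA) (j : ℕ) :
    ∑ i ∈ (arrSet A.J A.r A.p A.sched A.Jimm j).filter
        (fun i => cls A.p A.w i < cls A.p A.w j), wrem A.p A.w A.sched i (A.r j) ≤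
      ∑ θ ∈ (A.J.image (cls A.p A.w)).filter (· < cls A.p A.w j),
        Wd A.J A.r A.p A.w A.sched A.Jimm θ (A.r j) := by
  rw [← Finset.sum_fiberwise_of_maps_to (g := cls A.p A.w)
    (t := (A.J.image (cls A.p A.w)).filter (· < cls A.p A.w j))]
  · refine Finset.sum_le_sum fun θ _ => ?_
    refine Finset.sum_le_sum_of_subset_of_nonneg (fun i hi => ?_)
      fun i hi _ => A.wrem_nonneg (mem_J_of_mem_Ad hi) _
    simp only [arrSet, Ad, activeAt, Finset.mem_filter] at hi ⊢
    obtain ⟨⟨⟨hJ, hr, hn, hpos⟩, -⟩, hc⟩ := hi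
    exact ⟨⟨hJ, by omega, hn, hpos⟩, hc⟩
  · intro i hi
    simp only [arrSet, Finset.mem_filter] at hi
    exact Finset.mem_filter.mpr ⟨Finset.mem_image_of_mem _ hi.1.1, hi.2⟩

/-- For any job `j ∈ J⁻` of density class `δ = ⌊ρ_j⌋₂`, letting
`I_j = {θ < δ : P^θ(r_j) ≥ (1.5)^(δ−θ)·p_j/(8ε)}`, we have
`α_j⁻ ≤ 4·p_j·∑_{θ∈I_j} W^θ`. -/
theorem alphaMinus_le_index_set (A : AlgA) (j : ℕ)
    (hj : j ∈ Jminus A.J A.r A.p A.w A.sched A.Jimm A.ε) :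
    alphaMinus A.J A.r A.p A.w A.sched A.Jimm j ≤
      4 * A.p j * ∑' θ : ℤ,
        if θ < cls A.p A.w j ∧
            (1.5 : ℝ) ^ (cls A.p A.w j - θ) * A.p j / (8 * A.ε) ≤
              Pd A.J A.r A.p A.w A.sched A.Jimm θ (A.r j)
        then Wmax A.J A.r A.p A.w A.sched A.Jimm θ else 0 := by
  have hjJ : j ∈ A.J := (Finset.mem_filter.mp hj).1
  have hα := (Finset.mem_filter.mp hj).2
  have hS := A.arr_sum_le j
  have hp : (0 : ℝ) < A.p j := Nat.cast_pos.mpr (A.hp j hjJ)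
  have hε := A.hε
  unfold alphaMinus at hα ⊢
  set S := ∑ i ∈ (arrSet A.J A.r A.p A.sched A.Jimm j).filter
        (fun i => cls A.p A.w i < cls A.p A.w j), wrem A.p A.w A.sched i (A.r j) with hSdef
  set δ := cls A.p A.w j with hδ
  set K := (A.J.image (cls A.p A.w)).filter (· < δ) with hK
  have hKlt : ∀ θ ∈ K, θ < δ := fun θ hθ => (Finset.mem_filter.mp hθ).2
  -- Outside `K` the class is empty at time `r_j`, while the threshold is positive.
  rw [tsum_eq_sum (s := K)]
  swap
  · intro θ hθ
    rw [if_neg]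
    rintro ⟨hlt, hle⟩
    have hempty : Pd A.J A.r A.p A.w A.sched A.Jimm θ (A.r j) = 0 := by
      refine Finset.sum_eq_zero fun i hi => (hθ ?_).elim
      exact Finset.mem_filter.mpr ⟨Finset.mem_image.mpr
        ⟨i, mem_J_of_mem_Ad hi, (Finset.mem_filter.mp hi).2⟩, hlt⟩
    rw [hempty] at hle
    have : (0 : ℝ) < (1.5 : ℝ) ^ (δ - θ) * A.p j / (8 * A.ε) := by positivity
    linarith
  set F : ℤ → ℝ := fun θ => if θ < δ ∧ (1.5 : ℝ) ^ (δ - θ) * A.p j / (8 * A.ε) ≤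
      Pd A.J A.r A.p A.w A.sched A.Jimm θ (A.r j)
    then Wmax A.J A.r A.p A.w A.sched A.Jimm θ else 0 with hF
  set c : ℝ := 2 ^ δ * A.p j / (4 * A.ε) with hc
  have hc0 : 0 < c := by positivity
  have hterm : ∀ θ ∈ K, Wd A.J A.r A.p A.w A.sched A.Jimm θ (A.r j) ≤
      F θ + c * (3 / 4 : ℝ) ^ (δ - θ) := by
    intro θ hθ
    by_cases h : (1.5 : ℝ) ^ (δ - θ) * A.p j / (8 * A.ε) ≤
      Pd A.J A.r A.p A.w A.sched A.Jimm θ (A.r j)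
    · have h1 : F θ = Wmax A.J A.r A.p A.w A.sched A.Jimm θ := if_pos ⟨hKlt θ hθ, h⟩
      have h2 := A.Wd_le_Wmax θ (A.r j)
      have h3 : 0 < c * (3 / 4 : ℝ) ^ (δ - θ) := by positivity
      linarith
    · have h1 : F θ = 0 := if_neg fun h' => h h'.2
      rw [h1, zero_add]
      have h2 := A.Wd_le_Pd θ (A.r j)
      have h3 : (2 : ℝ) ^ (θ + 1) * Pd A.J A.r A.p A.w A.sched A.Jimm θ (A.r j) ≤
          2 ^ (θ + 1) * ((1.5 : ℝ) ^ (δ - θ) * A.p j / (8 * A.ε)) :=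
        mul_le_mul_of_nonneg_left (not_le.mp h).le (by positivity)
      have h4 : (2 : ℝ) ^ (θ + 1) * ((1.5 : ℝ) ^ (δ - θ) * A.p j / (8 * A.ε)) =
          c * (3 / 4 : ℝ) ^ (δ - θ) := by
        have e1 : (1.5 : ℝ) ^ (δ - θ) = 2 ^ (δ - θ) * (3 / 4) ^ (δ - θ) := by
          rw [← mul_zpow]; norm_num
        have e2 : (2 : ℝ) ^ δ = 2 ^ θ * 2 ^ (δ - θ) := by
          rw [← zpow_add₀ (by norm_num)]; congr 1; ring
        rw [hc, e1, e2, zpow_add₀ (by norm_num), zpow_one]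
        field_simp
        ring
      linarith
  have hsum := Finset.sum_le_sum hterm
  rw [Finset.sum_add_distrib, ← Finset.mul_sum] at hsum
  have hgeom := mul_le_mul_of_nonneg_left (sum_geom_le K δ hKlt) hc0.le
  -- `2^δ · p_j ≤ ρ_j · p_j = w_j` and `w_j / ε < S`, so the classes outside `I_j`
  -- contribute at most `3c ≤ (3/4) · S`.
  have hlow : (2 : ℝ) ^ δ * A.p j ≤ A.w j := by
    have h := Int.zpow_log_le_self (b := 2) (by norm_num) (A.den_pos hjJ)
    have h' : (2 : ℝ) ^ δ ≤ A.w j / A.p j := by exact_mod_cast h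
    exact (le_div_iff₀ hp).mp h'
  have hc3 : c ≤ S / 4 := by
    have h1 : A.w j / A.ε < S := by
      have : A.p j * (A.w j / A.ε) < A.p j * S := by
        calc A.p j * (A.w j / A.ε) = A.w j * A.p j / A.ε := by ring
          _ < _ := hα
      exact lt_of_mul_lt_mul_left this hp.le
    have h2 : 2 ^ δ * A.p j / A.ε ≤ A.w j / A.ε := div_le_div_of_nonneg_right hlow hε.le
    have h3 : c = 2 ^ δ * A.p j / A.ε / 4 := by rw [hc]; field_simp
    linarith
  have hfin : S ≤ 4 * ∑ θ ∈ K, F θ := by linarith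
  calc (A.p j : ℝ) * S ≤ A.p j * (4 * ∑ θ ∈ K, F θ) := mul_le_mul_of_nonneg_left hfin hp.le
    _ = _ := by ring
end NPSched
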